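/- arXiv:2505.15290 — 4 statements merged into one kernel-verified Lean document; each statement's English description precedes it below -/
import Mathlib

section
/- Fix a labelled Markov chain ⟨S, L, τ, ℓ⟩. (a) The function Filter is monotone with respect to set inclusion: for all probabilistic bisimulations R ⊆ R' with S²_Δ ⊆ R and R' ⊆ ∼, Filter(R) ⊆ Filter(R'). (b) The function Prune is not monotone: there exist a finite set S and reflexive symmetric relations A ⊆ B ⊆ S×S such that Prune(A) is not a subset of Prune(B). -/
open Finset Filter
open scoped Classical

/-- `μ` is a probability distribution on the finite type `X`. -/
def IsDist {X : Type*} [Fintype X] (μ : X → ℝ) : Prop :=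
  (∀ x, 0 ≤ μ x) ∧ ∑ x, μ x = 1

/-- `ω` is a coupling of the distributions `μ` and `ν`. -/
def IsCoupling {X : Type*} [Fintype X] (ω : X × X → ℝ) (μ ν : X → ℝ) : Prop :=
  IsDist ω ∧ (∀ x, ∑ y, ω (x, y) = μ x) ∧ (∀ x, ∑ y, ω (y, x) = ν x)

/-- Total variation distance: the maximum pointwise difference. -/
noncomputable def dTV {X : Type*} [Fintype X] (μ ν : X → ℝ) : ℝ :=
  ⨆ x, |μ x - ν x|

/-- The support of a (sub)distribution: points of positive probability. -/
def psupp {X : Type*} (μ : X → ℝ) : Set X := {x | 0 < μ x}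

/-- Distance between functions into distributions. -/
noncomputable def dF {A B : Type*} [Fintype B] (f g : A → B → ℝ) : ℝ :=
  ⨆ a, dTV (f a) (g a)

/-- `τ` is a transition probability function on `S`. -/
def IsTransFn {S : Type*} [Fintype S] (τ : S → S → ℝ) : Prop := ∀ s, IsDist (τ s)

/-- The diagonal `S²_Δ`. -/
def SDelta (S : Type*) : Set (S × S) := {p | p.1 = p.2}

/-- `P` is a policy for `τ` (with labelling `ℓ`). -/
def IsPolicy {S L : Type*} [Fintype S] (ℓ : S → L) (τ : S → S → ℝ)
    (P : S × S → S × S → ℝ) : Prop :=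
  (∀ p, IsDist (P p)) ∧
  (∀ p : S × S, ℓ p.1 = ℓ p.2 → IsCoupling (P p) (τ p.1) (τ p.2)) ∧
  (∀ p : S × S, ℓ p.1 ≠ ℓ p.2 → psupp (P p) = {p})

/-- A policy is `S²_Δ`-closed if the support of `P (s,s)` lies in the diagonal. -/
def DeltaClosed {S : Type*} (P : S × S → S × S → ℝ) : Prop :=
  ∀ s : S, psupp (P (s, s)) ⊆ SDelta S

/-- `d` is a `[0,1]`-valued function. -/
def Is01 {A : Type*} (d : A → ℝ) : Prop := ∀ a, 0 ≤ d a ∧ d a ≤ 1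

/-- `d` is the least fixed point of `F` on the complete lattice of `[0,1]`-valued functions. -/
def IsLfpOn {A : Type*} (F : (A → ℝ) → (A → ℝ)) (d : A → ℝ) : Prop :=
  Is01 d ∧ F d = d ∧ ∀ e, Is01 e → F e = e → ∀ a, d a ≤ e a

/-- The map `Γ_P` whose least fixed point is `γ_P`. -/
noncomputable def GammaF {S L : Type*} [Fintype S] (ℓ : S → L)
    (P : S × S → S × S → ℝ) (d : S × S → ℝ) : S × S → ℝ :=
  fun p => if ℓ p.1 ≠ ℓ p.2 then 1 else ∑ q, P p q * d q

/-- The map `Δ_τ` whose least fixed point is the probabilistic bisimilarity distance `δ_τ`. -/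
noncomputable def DeltaF {S L : Type*} [Fintype S] (ℓ : S → L)
    (τ : S → S → ℝ) (d : S × S → ℝ) : S × S → ℝ :=
  fun p => if ℓ p.1 ≠ ℓ p.2 then 1
    else sInf {r | ∃ ω, IsCoupling ω (τ p.1) (τ p.2) ∧ r = ∑ q, ω q * d q}

/-- The map whose least fixed point is `ρ_P`, the probability of reaching `S²_Δ`. -/
noncomputable def ReachF {S : Type*} [Fintype S]
    (P : S × S → S × S → ℝ) (e : S × S → ℝ) : S × S → ℝ :=
  fun p => if p.1 = p.2 then 1 else ∑ q, P p q * e q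

/-- States `s` and `t` are robustly probabilistically bisimilar. -/
def Robust {S L : Type*} [Fintype S] (ℓ : S → L) (τ : S → S → ℝ) (s t : S) : Prop :=
  ∃ P ρ, IsPolicy ℓ τ P ∧ IsLfpOn (ReachF P) ρ ∧ ρ (s, t) = 1

/-- `R` is a probabilistic bisimulation. -/
def IsBisim {S L : Type*} [Fintype S] (ℓ : S → L) (τ : S → S → ℝ)
    (R : Set (S × S)) : Prop :=
  Equivalence (fun s t => (s, t) ∈ R) ∧
  ∀ p ∈ R, ℓ p.1 = ℓ p.2 ∧ ∃ ω, IsCoupling ω (τ p.1) (τ p.2) ∧ psupp ω ⊆ R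

/-- Probabilistic bisimilarity `∼`. -/
def Bisimilar {S L : Type*} [Fintype S] (ℓ : S → L) (τ : S → S → ℝ) (s t : S) : Prop :=
  ∃ R, IsBisim ℓ τ R ∧ (s, t) ∈ R

/-- A step of a path in `⟨S×S, P⟩` supported by `R`. -/
def SupStep {S : Type*} (P : S × S → S × S → ℝ) (R : Set (S × S)) (a b : S × S) : Prop :=
  a ∈ R ∧ psupp (P a) ⊆ R ∧ 0 < P a b

/-- `R` supports a path from `p` to `S²_Δ` in `⟨S×S, P⟩`. -/
def SupportsPathToDelta {S : Type*} (P : S × S → S × S → ℝ) (R : Set (S × S))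
    (p : S × S) : Prop :=
  ∃ q : S × S, q.1 = q.2 ∧ Relation.ReflTransGen (SupStep P R) p q ∧
    q ∈ R ∧ psupp (P q) ⊆ R

/-- `R` is a robust bisimulation. -/
def IsRobustBisim {S L : Type*} [Fintype S] (ℓ : S → L) (τ : S → S → ℝ)
    (R : Set (S × S)) : Prop :=
  IsBisim ℓ τ R ∧ ∀ p ∈ R, ∃ P, IsPolicy ℓ τ P ∧ SupportsPathToDelta P R p

/-- The function `Filter` from the algorithm. -/
def FilterFn {S L : Type*} [Fintype S] (ℓ : S → L) (τ : S → S → ℝ)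
    (R : Set (S × S)) : Set (S × S) :=
  {p ∈ R | ∃ P, IsPolicy ℓ τ P ∧ SupportsPathToDelta P R p}

/-- The function `Prune` from the algorithm. -/
def PruneFn {S : Type*} (Q : Set (S × S)) : Set (S × S) :=
  {p ∈ Q | ∀ u : S, ((p.2, u) ∈ Q → (p.1, u) ∈ Q) ∧ ((u, p.1) ∈ Q → (u, p.2) ∈ Q)}

/-- `B` is the greatest probabilistic bisimulation contained in `Q` (i.e. `B = Bisim(Q)`). -/
def IsGreatestBisimIn {S L : Type*} [Fintype S] (ℓ : S → L) (τ : S → S → ℝ)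
    (Q B : Set (S × S)) : Prop :=
  IsBisim ℓ τ B ∧ B ⊆ Q ∧ ∀ B', IsBisim ℓ τ B' → B' ⊆ Q → B' ⊆ B

/-- Reachability in the Markov chain `⟨S×S, P⟩`. -/
def Reach {S : Type*} (P : S × S → S × S → ℝ) (p q : S × S) : Prop :=
  Relation.ReflTransGen (fun a b => 0 < P a b) p q

/-- `C` is a communication class of `⟨S×S, P⟩`. -/
def IsCommClass {S : Type*} (P : S × S → S × S → ℝ) (C : Set (S × S)) : Prop :=
  ∃ p, C = {q | Reach P p q ∧ Reach P q p}

/-- `C` is closed: no transition of positive probability leaves `C`. -/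
def IsClosedClass {S : Type*} (P : S × S → S × S → ℝ) (C : Set (S × S)) : Prop :=
  ∀ p ∈ C, psupp (P p) ⊆ C

/-- Proposition 14: `Filter` is monotone with respect to `⊆`, but `Prune` is not. -/
theorem filter_monotone_prune_not {S L : Type*} [Fintype S] [Nonempty S] [Fintype L]
    (ℓ : S → L) (hℓ : ∃ a b : S, ℓ a ≠ ℓ b)
    (τ : S → S → ℝ) (hτ : IsTransFn τ) :
    (∀ R R' : Set (S × S), IsBisim ℓ τ R → IsBisim ℓ τ R' →
      SDelta S ⊆ R → R ⊆ {p : S × S | Bisimilar ℓ τ p.1 p.2} →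
      SDelta S ⊆ R' → R' ⊆ {p : S × S | Bisimilar ℓ τ p.1 p.2} →
      R ⊆ R' → FilterFn ℓ τ R ⊆ FilterFn ℓ τ R') ∧
    (∃ (T : Type) (_ : Fintype T) (A B : Set (T × T)),
      (∀ x : T, (x, x) ∈ A) ∧ (∀ p ∈ A, (p.2, p.1) ∈ A) ∧
      (∀ x : T, (x, x) ∈ B) ∧ (∀ p ∈ B, (p.2, p.1) ∈ B) ∧
      A ⊆ B ∧ ¬ PruneFn A ⊆ PruneFn B) := by
  refine ⟨?_, ?_⟩
  · rintro R R' - - - - - - hRR p ⟨hp, P, hP, q, hq, hpath, hqR, hsupp⟩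
    refine ⟨hRR hp, P, hP, q, hq, ?_, hRR hqR, hsupp.trans hRR⟩
    have hstep : ∀ a b, SupStep P R a b → SupStep P R' a b :=
      fun a b h => ⟨hRR h.1, h.2.1.trans hRR, h.2.2⟩
    exact Relation.ReflTransGen.mono hstep _ _ hpath
  · refine ⟨Fin 3, inferInstance, {p | p.1 = p.2 ∨ (p.1 ≠ 2 ∧ p.2 ≠ 2)},
      {p | p.1 = p.2 ∨ p.1 = 1 ∨ p.2 = 1} ∪ {p | p.1 ≠ 2 ∧ p.2 ≠ 2}, ?_, ?_, ?_, ?_, ?_, ?_⟩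
    · intro x
      exact Or.inl rfl
    · rintro ⟨x, y⟩ h
      simp only [Set.mem_ofPred_eq] at h ⊢
      tauto
    · intro x
      simp
    · rintro ⟨x, y⟩ h
      simp only [Set.mem_union, Set.mem_ofPred_eq] at h ⊢
      rcases h with (h | h | h) | h
      · exact Or.inl (Or.inl h.symm)
      · exact Or.inl (Or.inr (Or.inr h))
      · exact Or.inl (Or.inr (Or.inl h))
      · exact Or.inr h.symm
    · rintro ⟨x, y⟩ h
      simp only [Set.mem_union, Set.mem_ofPred_eq] at h ⊢
      tauto
    · intro h
      have h1 : ((0 : Fin 3), (1 : Fin 3)) ∈ PruneFn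
          {p : Fin 3 × Fin 3 | p.1 = p.2 ∨ (p.1 ≠ 2 ∧ p.2 ≠ 2)} := by
        refine ⟨Or.inr ⟨by decide, by decide⟩, fun u => ?_⟩
        fin_cases u <;> simp
      have h2 := ((h h1).2 2).1
      simp at h2
end

section
/- Fix a labelled Markov chain ⟨S, L, τ, ℓ⟩. A probabilistic bisimulation R ⊆ S×S is a robust bisimulation if and only if R is a fixed point of Refine, i.e., Refine(R) = R. -/
open Finset Filter
open scoped Classical

/-- Proposition 15: a probabilistic bisimulation `R` is a robust bisimulation iff it is a
fixed point of `Refine = Bisim ∘ Prune ∘ Filter`. -/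
theorem robust_bisimulation_iff_fixed_point {S L : Type*} [Fintype S] [Nonempty S] [Fintype L]
    (ℓ : S → L) (hℓ : ∃ a b : S, ℓ a ≠ ℓ b)
    (τ : S → S → ℝ) (hτ : IsTransFn τ)
    (R : Set (S × S)) (hR : IsBisim ℓ τ R)
    (B : Set (S × S)) (hB : IsGreatestBisimIn ℓ τ (PruneFn (FilterFn ℓ τ R)) B) :
    IsRobustBisim ℓ τ R ↔ B = R := by
  constructor
  · rintro ⟨_, h⟩
    have hF : FilterFn ℓ τ R = R := by
      ext p
      exact ⟨fun hp => hp.1, fun hp => ⟨hp, h p hp⟩⟩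
    have hP : PruneFn (FilterFn ℓ τ R) = R := by
      rw [hF]
      ext p
      refine ⟨fun hp => hp.1, fun hp => ⟨hp, fun u => ⟨fun hu => ?_, fun hu => ?_⟩⟩⟩
      · exact hR.1.trans (x := p.1) (y := p.2) (z := u) hp hu
      · exact hR.1.trans (x := u) (y := p.1) (z := p.2) hu hp
    rw [hP] at hB
    exact Set.Subset.antisymm hB.2.1 (hB.2.2 R hR subset_rfl)
  · rintro rfl
    exact ⟨hR, fun p hp => (hB.2.1 hp).1.2⟩
end

section
/- Fix a labelled Markov chain ⟨S, L, τ, ℓ⟩. Let R ⊆ S×S be a probabilistic bisimulation with ≃ ⊆ R ⊆ ∼. Then for all (s,t), (t,u) ∈ Filter(R), if s ≃ t or t ≃ u, then (s,u) ∈ Filter(R). -/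
open Finset Filter
open scoped Classical

/-- A joint step of two states staying inside `R`. -/
def EStep {S : Type*} (τ : S → S → ℝ) (R : Set (S × S)) (a b : S × S) : Prop :=
  0 < τ a.1 b.1 ∧ 0 < τ a.2 b.2 ∧ a ∈ R ∧ b ∈ R

lemma IsCoupling.pos {X : Type*} [Fintype X] {ω : X × X → ℝ} {μ ν : X → ℝ}
    (h : IsCoupling ω μ ν) {q : X × X} (hq : 0 < ω q) : 0 < μ q.1 ∧ 0 < ν q.2 := by
  obtain ⟨h0, h1, h2⟩ := h
  constructor
  · rw [← h1 q.1]
    exact Finset.sum_pos' (fun y _ => h0.1 _) ⟨q.2, Finset.mem_univ _, hq⟩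
  · rw [← h2 q.2]
    exact Finset.sum_pos' (fun y _ => h0.1 _) ⟨q.1, Finset.mem_univ _, hq⟩

lemma isDist_of_marg {X : Type*} [Fintype X] {ω : X × X → ℝ} {μ ν : X → ℝ}
    (hμ : IsDist μ) (h0 : ∀ q, 0 ≤ ω q) (h1 : ∀ x, ∑ y, ω (x, y) = μ x)
    (h2 : ∀ x, ∑ y, ω (y, x) = ν x) : IsCoupling ω μ ν := by
  refine ⟨⟨h0, ?_⟩, h1, h2⟩
  rw [Fintype.sum_prod_type]
  simp only [h1]
  exact hμ.2

lemma class_mass {X : Type*} [Fintype X] {R : Set (X × X)}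
    (hE : Equivalence (fun s t => (s, t) ∈ R)) {ω : X × X → ℝ} {μ ν : X → ℝ}
    (h : IsCoupling ω μ ν) (hs : psupp ω ⊆ R) (x : X) :
    ∑ z, (if (x, z) ∈ R then μ z else 0) = ∑ z, (if (x, z) ∈ R then ν z else 0) := by
  obtain ⟨h0, h1, h2⟩ := h
  have e1 : ∀ z, (if (x, z) ∈ R then μ z else 0) = ∑ w, (if (x, z) ∈ R then ω (z, w) else 0) := by
    intro z
    split_ifs
    · exact (h1 z).symm
    · simp
  have e2 : ∀ z, (if (x, z) ∈ R then ν z else 0) = ∑ w, (if (x, z) ∈ R then ω (w, z) else 0) := by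
    intro z
    split_ifs
    · exact (h2 z).symm
    · simp
  simp only [e1, e2]
  rw [Finset.sum_comm]
  refine Finset.sum_congr rfl fun w _ => Finset.sum_congr rfl fun z _ => ?_
  rcases (h0.1 (z, w)).eq_or_lt with hz | hz
  · simp [← hz]
  · have hzw : (z, w) ∈ R := hs hz
    have : (x, z) ∈ R ↔ (x, w) ∈ R :=
      ⟨fun h => hE.trans h hzw, fun h => hE.trans h (hE.symm hzw)⟩
    simp [this]

lemma full_coupling {X : Type*} [Fintype X] {R : Set (X × X)}
    (hE : Equivalence (fun s t => (s, t) ∈ R)) {ω : X × X → ℝ} {μ ν : X → ℝ}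
    (hμ : IsDist μ) (hν : IsDist ν)
    (h : IsCoupling ω μ ν) (hs : psupp ω ⊆ R) :
    ∃ ω', IsCoupling ω' μ ν ∧ psupp ω' ⊆ R ∧
      ∀ q ∈ R, 0 < μ q.1 → 0 < ν q.2 → 0 < ω' q := by
  have hm := class_mass hE h hs
  set m : X → ℝ := fun x => ∑ z, (if (x, z) ∈ R then ν z else 0) with hmdef
  have hm' : ∀ x, ∑ z, (if (x, z) ∈ R then μ z else 0) = m x := hm
  have m0 : ∀ x, 0 ≤ m x := fun x => Finset.sum_nonneg fun z _ => by
    split_ifs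
    · exact hν.1 z
    · exact le_rfl
  have mν : ∀ x y, (x, y) ∈ R → ν y ≤ m x := fun x y hxy => by
    have := Finset.single_le_sum (f := fun z => if (x, z) ∈ R then ν z else 0)
      (fun z _ => by
        try dsimp only
        split_ifs
        · exact hν.1 z
        · exact le_rfl) (Finset.mem_univ y)
    simpa [hxy] using this
  have mμ : ∀ x, μ x ≤ m x := fun x => by
    have := Finset.single_le_sum (f := fun z => if (x, z) ∈ R then μ z else 0)
      (fun z _ => by
        try dsimp only
        split_ifs
        · exact hμ.1 z
        · exact le_rfl) (Finset.mem_univ x)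
    rw [hm' x] at this
    simpa [hE.refl x] using this
  have meq : ∀ x y, (x, y) ∈ R → m x = m y := fun x y hxy => by
    refine Finset.sum_congr rfl fun z _ => ?_
    have : (x, z) ∈ R ↔ (y, z) ∈ R :=
      ⟨fun h => hE.trans (hE.symm hxy) h, fun h => hE.trans hxy h⟩
    simp [this]
  refine ⟨fun q => if q ∈ R then μ q.1 * ν q.2 / m q.1 else 0, ?_, ?_, ?_⟩
  · refine isDist_of_marg hμ ?_ ?_ ?_
    · intro q
      try dsimp only
      split_ifs
      · exact div_nonneg (mul_nonneg (hμ.1 _) (hν.1 _)) (m0 _)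
      · exact le_rfl
    · intro x
      have e : ∀ y, (if (x, y) ∈ R then μ x * ν y / m x else 0)
          = μ x / m x * (if (x, y) ∈ R then ν y else 0) := by
        intro y
        split_ifs
        · ring
        · simp
      simp only [e]
      rw [← Finset.mul_sum]
      change μ x / m x * m x = μ x
      by_cases hx : m x = 0
      · have := mμ x
        have := hμ.1 x
        rw [hx]
        simp
        linarith
      · field_simp
    · intro y
      have e : ∀ x, (if (x, y) ∈ R then μ x * ν y / m x else 0)
          = ν y / m y * (if (y, x) ∈ R then μ x else 0) := by
        intro x
        by_cases hxy : (x, y) ∈ R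
        · have hyx : (y, x) ∈ R := hE.symm hxy
          simp only [hxy, hyx, if_true, meq x y hxy]
          ring
        · have hyx : (y, x) ∉ R := fun h => hxy (hE.symm h)
          simp [hxy, hyx]
      simp only [e]
      rw [← Finset.mul_sum, hm' y]
      by_cases hx : m y = 0
      · have := mν y y (hE.refl y)
        have := hν.1 y
        rw [hx]
        simp
        linarith
      · field_simp
  · intro q hq
    by_contra hn
    simp [psupp, hn] at hq
  · intro q hq h1 h2
    simp only [hq, if_true]
    have : 0 < m q.1 := lt_of_lt_of_le h1 (mμ _)
    positivity

lemma exists_full_policy {S L : Type*} [Fintype S] (ℓ : S → L) (τ : S → S → ℝ)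
    (hτ : IsTransFn τ) (R : Set (S × S)) (hR : IsBisim ℓ τ R) :
    ∃ P, IsPolicy ℓ τ P ∧ ∀ p ∈ R, psupp (P p) ⊆ R ∧ ∀ q, EStep τ R p q → 0 < P p q := by
  have key : ∀ p : S × S, ∃ ω : S × S → ℝ, IsDist ω ∧
      (ℓ p.1 = ℓ p.2 → IsCoupling ω (τ p.1) (τ p.2)) ∧
      (ℓ p.1 ≠ ℓ p.2 → psupp ω = {p}) ∧
      (p ∈ R → psupp ω ⊆ R ∧ ∀ q, EStep τ R p q → 0 < ω q) := by
    intro p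
    by_cases hp : p ∈ R
    · obtain ⟨hl, ω, hω, hs⟩ := hR.2 p hp
      obtain ⟨ω', h1, h2, h3⟩ := full_coupling hR.1 (hτ _) (hτ _) hω hs
      exact ⟨ω', h1.1, fun _ => h1, fun h => absurd hl h,
        fun _ => ⟨h2, fun q hq => h3 q hq.2.2.2 hq.1 hq.2.1⟩⟩
    · by_cases hl : ℓ p.1 = ℓ p.2
      · have hc : IsCoupling (fun q : S × S => τ p.1 q.1 * τ p.2 q.2) (τ p.1) (τ p.2) := by
          refine isDist_of_marg (hτ _) ?_ ?_ ?_
          · exact fun q => mul_nonneg ((hτ _).1 _) ((hτ _).1 _)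
          · intro x
            try dsimp only
            rw [← Finset.mul_sum, (hτ _).2, mul_one]
          · intro x
            try dsimp only
            rw [← Finset.sum_mul, (hτ _).2, one_mul]
        exact ⟨_, hc.1, fun _ => hc, fun h => absurd hl h, fun h => absurd h hp⟩
      · refine ⟨fun q => if q = p then 1 else 0, ⟨?_, ?_⟩, fun h => absurd h hl, fun _ => ?_,
          fun h => absurd h hp⟩
        · intro q
          try dsimp only
          split_ifs <;> norm_num
        · simp
        · ext q
          by_cases h : q = p <;> simp [psupp, h]
  choose P h1 h2 h3 h4 using key
  exact ⟨P, ⟨h1, h2, h3⟩, h4⟩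

lemma mem_filter_iff {S L : Type*} [Fintype S] (ℓ : S → L) (τ : S → S → ℝ)
    (hτ : IsTransFn τ) (R : Set (S × S)) (hR : IsBisim ℓ τ R) (p : S × S) :
    p ∈ FilterFn ℓ τ R ↔ p ∈ R ∧ ∃ z, Relation.ReflTransGen (EStep τ R) p (z, z) := by
  constructor
  · rintro ⟨hp, P, hP, q, hq, hpath, -, -⟩
    refine ⟨hp, q.1, ?_⟩
    have : (q.1, q.1) = q := Prod.ext rfl hq
    rw [this]
    refine hpath.lift id ?_
    rintro a b ⟨ha, hs, hpos⟩
    have := (hP.2.1 a (hR.2 a ha).1).pos hpos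
    exact ⟨this.1, this.2, ha, hs hpos⟩
  · rintro ⟨hp, z, hz⟩
    obtain ⟨P, hP, hfull⟩ := exists_full_policy ℓ τ hτ R hR
    refine ⟨hp, P, hP, (z, z), rfl, ?_, hR.1.refl z, (hfull _ (hR.1.refl z)).1⟩
    refine hz.lift id ?_
    intro a b hab
    exact ⟨hab.2.2.1, (hfull a hab.2.2.1).1, (hfull a hab.2.2.1).2 b hab⟩

lemma reachF_mono {S : Type*} [Fintype S] {P : S × S → S × S → ℝ}
    (hP : ∀ p q, 0 ≤ P p q) {e f : S × S → ℝ} (h : ∀ p, e p ≤ f p) (p : S × S) :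
    ReachF P e p ≤ ReachF P f p := by
  unfold ReachF
  split_ifs
  · exact le_rfl
  · exact Finset.sum_le_sum fun q _ => mul_le_mul_of_nonneg_left (h q) (hP p q)

lemma lfp_le_prefixed {S : Type*} [Fintype S] {P : S × S → S × S → ℝ}
    (hP : ∀ p, IsDist (P p)) {ρ : S × S → ℝ} (hρ : IsLfpOn (ReachF P) ρ)
    {e : S × S → ℝ} (he : Is01 e) (hpre : ∀ p, ReachF P e p ≤ e p) (p : S × S) :
    ρ p ≤ e p := by
  have h01 : ∀ d, Is01 d → Is01 (ReachF P d) := by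
    intro d hd p
    unfold ReachF
    split_ifs
    · norm_num
    · refine ⟨Finset.sum_nonneg fun q _ => mul_nonneg ((hP p).1 q) (hd q).1, ?_⟩
      rw [← (hP p).2]
      exact Finset.sum_le_sum fun q _ => mul_le_of_le_one_right ((hP p).1 q) (hd q).2
  -- the pointwise infimum of all prefixed points
  let A := {d : S × S → ℝ // Is01 d ∧ ∀ p, ReachF P d p ≤ d p}
  have : Nonempty A := ⟨⟨e, he, hpre⟩⟩
  let m : S × S → ℝ := fun p => ⨅ d : A, d.1 p
  have hbdd : ∀ p, BddBelow (Set.range fun d : A => d.1 p) := fun p =>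
    ⟨0, by rintro _ ⟨d, rfl⟩; exact (d.2.1 p).1⟩
  have hle : ∀ (d : A) p, m p ≤ d.1 p := fun d p => ciInf_le (hbdd p) d
  have hm01 : Is01 m := fun p =>
    ⟨le_ciInf fun d => (d.2.1 p).1, (hle ⟨e, he, hpre⟩ p).trans (he p).2⟩
  have hmpre : ∀ p, ReachF P m p ≤ m p := fun p =>
    le_ciInf fun d => (reachF_mono (fun p => (hP p).1) (hle d) p).trans (d.2.2 p)
  have hmpost : ∀ p, m p ≤ ReachF P m p :=
    hle ⟨ReachF P m, h01 m hm01, fun p => reachF_mono (fun p => (hP p).1) hmpre p⟩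
  have hfix : ReachF P m = m := funext fun p => le_antisymm (hmpre p) (hmpost p)
  exact (hρ.2.2 m hm01 hfix p).trans (hle ⟨e, he, hpre⟩ p)

/-- Robust or equal. -/
def RobEq {S L : Type*} [Fintype S] (ℓ : S → L) (τ : S → S → ℝ) (a b : S) : Prop :=
  a = b ∨ Robust ℓ τ a b

lemma lfp_one_step {S : Type*} [Fintype S] {P : S × S → S × S → ℝ}
    (hP : ∀ p, IsDist (P p)) {ρ : S × S → ℝ} (hρ : IsLfpOn (ReachF P) ρ)
    {p q : S × S} (hp : ρ p = 1) (hd : p.1 ≠ p.2) (hq : 0 < P p q) : ρ q = 1 := by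
  have h1 : ∑ r, P p r * ρ r = 1 := by
    have := congrFun hρ.2.1 p
    rw [hp] at this
    simpa [ReachF, hd] using this
  have h2 : ∑ r, P p r * (1 - ρ r) = 0 := by
    simp only [mul_sub, mul_one, Finset.sum_sub_distrib, h1, (hP p).2, sub_self]
  have h3 := (Finset.sum_eq_zero_iff_of_nonneg (fun r _ =>
    mul_nonneg ((hP p).1 r) (sub_nonneg.2 (hρ.1 r).2))).1 h2 q (Finset.mem_univ _)
  rcases mul_eq_zero.1 h3 with h | h
  · exact absurd h hq.ne'
  · linarith

lemma lfp_one_reach {S : Type*} [Fintype S] {P : S × S → S × S → ℝ}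
    (hP : ∀ p, IsDist (P p)) {ρ : S × S → ℝ} (hρ : IsLfpOn (ReachF P) ρ)
    {p : S × S} (hp : ρ p = 1) :
    ∃ z, Relation.ReflTransGen (fun a b : S × S => a.1 ≠ a.2 ∧ 0 < P a b) p (z, z) := by
  set C : S × S → Prop := fun p =>
    ∃ z, Relation.ReflTransGen (fun a b : S × S => a.1 ≠ a.2 ∧ 0 < P a b) p (z, z) with hC
  by_contra hn
  have hle := lfp_le_prefixed hP hρ (e := fun p => if C p then 1 else 0)
    (fun p => by dsimp only; split_ifs <;> norm_num) (fun p => by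
      try dsimp only
      split_ifs with hc
      · unfold ReachF
        split_ifs
        · exact le_rfl
        · refine le_of_le_of_eq ?_ (hP p).2
          refine Finset.sum_le_sum fun q _ => mul_le_of_le_one_right ((hP p).1 q) ?_
          try dsimp only
          split_ifs <;> norm_num
      · have hd : p.1 ≠ p.2 := fun h => hc ⟨p.1, by
          rw [show (p.1, p.1) = p from Prod.ext rfl h]⟩
        simp only [ReachF, hd, if_false]
        refine (Finset.sum_eq_zero fun q _ => ?_).le
        rcases ((hP p).1 q).eq_or_lt with h | h
        · rw [← h, zero_mul]
        · have : ¬ C q := fun ⟨z, hz⟩ => hc ⟨z, hz.head ⟨hd, h⟩⟩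
          simp [this]) p
  have : ¬ C p := hn
  simp only [this, if_false, hp] at hle
  linarith

lemma robEq_right {S L : Type*} [Fintype S] {ℓ : S → L} {τ : S → S → ℝ} {a b b' : S}
    (hl : ℓ a = ℓ b) (h : RobEq ℓ τ a b) (hb : 0 < τ b b') :
    ∃ a', 0 < τ a a' ∧ RobEq ℓ τ a' b' := by
  by_cases hab : a = b
  · subst hab
    exact ⟨b', hb, Or.inl rfl⟩
  rcases h with h | ⟨P, ρ, hP, hρ, h1⟩
  · exact absurd h hab
  have hc := hP.2.1 (a, b) hl
  have : ∑ y, P (a, b) (y, b') ≠ 0 := by rw [hc.2.2 b']; exact hb.ne'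
  obtain ⟨a', -, ha'⟩ := Finset.exists_ne_zero_of_sum_ne_zero this
  have hpos : 0 < P (a, b) (a', b') := lt_of_le_of_ne (hc.1.1 _) ha'.symm
  exact ⟨a', (hc.pos hpos).1, Or.inr ⟨P, ρ, hP, hρ, lfp_one_step hP.1 hρ h1 hab hpos⟩⟩

lemma robEq_left {S L : Type*} [Fintype S] {ℓ : S → L} {τ : S → S → ℝ} {a b a' : S}
    (hl : ℓ a = ℓ b) (h : RobEq ℓ τ a b) (ha : 0 < τ a a') :
    ∃ b', 0 < τ b b' ∧ RobEq ℓ τ a' b' := by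
  by_cases hab : a = b
  · subst hab
    exact ⟨a', ha, Or.inl rfl⟩
  rcases h with h | ⟨P, ρ, hP, hρ, h1⟩
  · exact absurd h hab
  have hc := hP.2.1 (a, b) hl
  have : ∑ y, P (a, b) (a', y) ≠ 0 := by rw [hc.2.1 a']; exact ha.ne'
  obtain ⟨b', -, hb'⟩ := Finset.exists_ne_zero_of_sum_ne_zero this
  have hpos : 0 < P (a, b) (a', b') := lt_of_le_of_ne (hc.1.1 _) hb'.symm
  exact ⟨b', (hc.pos hpos).2, Or.inr ⟨P, ρ, hP, hρ, lfp_one_step hP.1 hρ h1 hab hpos⟩⟩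

lemma robEq_path {S L : Type*} [Fintype S] {ℓ : S → L} {τ : S → S → ℝ}
    {R : Set (S × S)} (hR : IsBisim ℓ τ R)
    (hlow : {p : S × S | Robust ℓ τ p.1 p.2} ⊆ R) {a b : S} (h : RobEq ℓ τ a b) :
    ∃ z, Relation.ReflTransGen (EStep τ R) (a, b) (z, z) := by
  rcases h with rfl | ⟨P, ρ, hP, hρ, h1⟩
  · exact ⟨a, .refl⟩
  obtain ⟨z, hz⟩ := lfp_one_reach hP.1 hρ h1
  refine ⟨z, ?_⟩
  have hin : ∀ p, ρ p = 1 → p ∈ R := fun p hp => hlow ⟨P, ρ, hP, hρ, hp⟩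
  generalize (a, b) = p at hz h1
  induction hz using Relation.ReflTransGen.head_induction_on with
  | refl => exact .refl
  | head hstep _ ih =>
    have hc := lfp_one_step hP.1 hρ h1 hstep.1 hstep.2
    have hpos := (hP.2.1 _ (hR.2 _ (hin _ h1)).1).pos hstep.2
    exact (ih hc).head ⟨hpos.1, hpos.2, hin _ h1, hin _ hc⟩

/-- Proposition 17: for a bisimulation `R` with `≃ ⊆ R ⊆ ∼`, if `(s,t),(t,u) ∈ Filter(R)`
and `s ≃ t` or `t ≃ u`, then `(s,u) ∈ Filter(R)`. -/
theorem filter_partial_transitivity {S L : Type*} [Fintype S] [Nonempty S] [Fintype L]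
    (ℓ : S → L) (hℓ : ∃ a b : S, ℓ a ≠ ℓ b)
    (τ : S → S → ℝ) (hτ : IsTransFn τ)
    (R : Set (S × S)) (hR : IsBisim ℓ τ R)
    (hlow : {p : S × S | Robust ℓ τ p.1 p.2} ⊆ R)
    (hhigh : R ⊆ {p : S × S | Bisimilar ℓ τ p.1 p.2})
    (s t u : S)
    (hst : (s, t) ∈ FilterFn ℓ τ R) (htu : (t, u) ∈ FilterFn ℓ τ R)
    (hrob : Robust ℓ τ s t ∨ Robust ℓ τ t u) :
    (s, u) ∈ FilterFn ℓ τ R := by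
  have hin : ∀ a b, RobEq ℓ τ a b → (a, b) ∈ R := by
    rintro a b (rfl | h)
    · exact hR.1.refl a
    · exact hlow h
  rw [mem_filter_iff ℓ τ hτ R hR] at hst htu ⊢
  refine ⟨hR.1.trans hst.1 htu.1, ?_⟩
  rcases hrob with h | h
  · obtain ⟨z, hz⟩ := htu.2
    have key : ∀ p q, Relation.ReflTransGen (EStep τ R) p q → ∀ s, RobEq ℓ τ s p.1 →
        ∃ s', Relation.ReflTransGen (EStep τ R) (s, p.2) (s', q.2) ∧ RobEq ℓ τ s' q.1 := by
      intro p q hpq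
      induction hpq using Relation.ReflTransGen.head_induction_on with
      | refl => exact fun s hs => ⟨s, .refl, hs⟩
      | @head a c hstep _ ih =>
        intro s hs
        obtain ⟨h1, h2, h3, h4⟩ := hstep
        obtain ⟨s', hs', hr⟩ := robEq_right (hR.2 _ (hin _ _ hs)).1 hs h1
        obtain ⟨s'', hp, hr'⟩ := ih s' hr
        have hst : EStep τ R (s, a.2) (s', c.2) :=
          ⟨hs', h2, hR.1.trans (hin _ _ hs) h3, hR.1.trans (hin _ _ hr) h4⟩
        exact ⟨s'', hp.head hst, hr'⟩
    obtain ⟨s', hp, hr⟩ := key _ _ hz s (Or.inr h)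
    obtain ⟨w, hw⟩ := robEq_path hR hlow hr
    exact ⟨w, hp.trans hw⟩
  · obtain ⟨z, hz⟩ := hst.2
    have key : ∀ p q, Relation.ReflTransGen (EStep τ R) p q → ∀ u, RobEq ℓ τ p.2 u →
        ∃ u', Relation.ReflTransGen (EStep τ R) (p.1, u) (q.1, u') ∧ RobEq ℓ τ q.2 u' := by
      intro p q hpq
      induction hpq using Relation.ReflTransGen.head_induction_on with
      | refl => exact fun s hs => ⟨s, .refl, hs⟩
      | @head a c hstep _ ih =>
        intro u hu
        obtain ⟨h1, h2, h3, h4⟩ := hstep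
        obtain ⟨u', hu', hr⟩ := robEq_left (hR.2 _ (hin _ _ hu)).1 hu h2
        obtain ⟨u'', hp, hr'⟩ := ih u' hr
        have hst : EStep τ R (a.1, u) (c.1, u') :=
          ⟨h1, hu', hR.1.trans h3 (hin _ _ hu), hR.1.trans h4 (hin _ _ hr)⟩
        exact ⟨u'', hp.head hst, hr'⟩
    obtain ⟨u', hp, hr⟩ := key _ _ hz u (Or.inr h)
    obtain ⟨w, hw⟩ := robEq_path hR hlow hr
    exact ⟨w, hp.trans hw⟩
end

section
/- Fix a labelled Markov chain ⟨S, L, τ, ℓ⟩. Define the sequence of relations R₀ = ∼ (probabilistic bisimilarity, which is itself a probabilistic bisimulation) and R_{n+1} = Refine(R_n). Then the sequence is decreasing with respect to inclusion, there exists n with R_{n+1} = R_n, and this eventual fixed point equals robust probabilistic bisimilarity ≃; equivalently, ≃ is the greatest fixed point of Refine and the iteration starting from ∼ computes ≃. -/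
open Finset Filter
open scoped Classical

/-- `p` can be driven inside `U` to the diagonal in `n` steps. -/
inductive GoodN {S L : Type*} [Fintype S] (ℓ : S → L) (τ : S → S → ℝ)
    (U : Set (S × S)) : ℕ → S × S → Prop
  | base (s : S) (h : (s, s) ∈ U) : GoodN ℓ τ U 0 (s, s)
  | step (n : ℕ) (p : S × S) (hp : p ∈ U) (hl : ℓ p.1 = ℓ p.2) (ω : S × S → ℝ)
      (hω : IsCoupling ω (τ p.1) (τ p.2)) (hs : psupp ω ⊆ U) (q : S × S) (hq : 0 < ω q)
      (hg : GoodN ℓ τ U n q) : GoodN ℓ τ U (n + 1) p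

def IsRob {S L : Type*} [Fintype S] (ℓ : S → L) (τ : S → S → ℝ) (U : Set (S × S)) : Prop :=
  (∀ s, (s, s) ∈ U) ∧ ∀ p ∈ U, ∃ n, GoodN ℓ τ U n p

def RobSetOf {S L : Type*} [Fintype S] (ℓ : S → L) (τ : S → S → ℝ) : Set (S × S) :=
  {p : S × S | Robust ℓ τ p.1 p.2}

section RobHelpers
variable {S L : Type*} [Fintype S] (ℓ : S → L) (τ : S → S → ℝ)

theorem GoodN.mem {U : Set (S × S)} {n : ℕ} {p : S × S} (h : GoodN ℓ τ U n p) : p ∈ U := by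
  cases h <;> assumption

theorem GoodN.label {U : Set (S × S)} {n : ℕ} {p : S × S} (h : GoodN ℓ τ U n p) :
    ℓ p.1 = ℓ p.2 := by
  cases h
  · rfl
  · assumption

theorem GoodN.mono {U V : Set (S × S)} (hUV : U ⊆ V) {n : ℕ} {p : S × S}
    (h : GoodN ℓ τ U n p) : GoodN ℓ τ V n p := by
  induction h with
  | base s h => exact .base s (hUV h)
  | step n p hp hl ω hω hs q hq hg ih =>
    exact .step n p (hUV hp) hl ω hω (hs.trans hUV) q hq ih

theorem coupling_swap {ω : S × S → ℝ} {μ ν : S → ℝ} (h : IsCoupling ω μ ν) :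
    IsCoupling (fun p => ω p.swap) ν μ := by
  refine ⟨⟨fun x => h.1.1 _, ?_⟩, fun x => h.2.2 x, fun x => h.2.1 x⟩
  rw [← h.1.2]
  exact Equiv.sum_comp (Equiv.prodComm S S) ω

theorem GoodN.swap {U V : Set (S × S)} (hUV : ∀ s t, (s, t) ∈ U → (t, s) ∈ V)
    {n : ℕ} {p : S × S} (h : GoodN ℓ τ U n p) : GoodN ℓ τ V n p.swap := by
  induction h with
  | base s h => exact .base s (hUV _ _ h)
  | step n p hp hl ω hω hs q hq hg ih =>
    refine .step n p.swap (hUV _ _ hp) hl.symm _ (coupling_swap hω) ?_ q.swap ?_ ih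
    · intro x hx
      exact hUV _ _ (hs hx)
    · simpa using hq

theorem coupling_diag {μ : S → ℝ} (h : IsDist μ) :
    IsCoupling (fun p : S × S => if p.1 = p.2 then μ p.1 else 0) μ μ := by
  refine ⟨⟨fun x => ?_, ?_⟩, fun x => ?_, fun x => ?_⟩
  · dsimp only
    split_ifs
    · exact h.1 _
    · exact le_rfl
  · rw [Fintype.sum_prod_type]
    simpa using h.2
  · simp
  · simp

theorem coupling_prod {μ ν : S → ℝ} (h : IsDist μ) (h' : IsDist ν) :
    IsCoupling (fun p : S × S => μ p.1 * ν p.2) μ ν := by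
  refine ⟨⟨fun x => mul_nonneg (h.1 _) (h'.1 _), ?_⟩, fun x => ?_, fun x => ?_⟩
  · rw [Fintype.sum_prod_type]
    simp [← Finset.mul_sum, h.2, h'.2]
  · simp [← Finset.mul_sum, h'.2]
  · simp [← Finset.sum_mul, h.2]

theorem coupling_zero_left {ω : S × S → ℝ} {μ ν : S → ℝ} (h : IsCoupling ω μ ν) {x : S}
    (hx : μ x = 0) (y : S) : ω (x, y) = 0 := by
  have := h.2.1 x
  rw [hx, Finset.sum_eq_zero_iff_of_nonneg (fun _ _ => h.1.1 _)] at this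
  exact this y (Finset.mem_univ _)

theorem coupling_zero_right {ω : S × S → ℝ} {μ ν : S → ℝ} (h : IsCoupling ω μ ν) {x : S}
    (hx : ν x = 0) (y : S) : ω (y, x) = 0 := by
  have := h.2.2 x
  rw [hx, Finset.sum_eq_zero_iff_of_nonneg (fun _ _ => h.1.1 _)] at this
  exact this y (Finset.mem_univ _)

theorem coupling_left_nonneg {ω : S × S → ℝ} {μ ν : S → ℝ} (h : IsCoupling ω μ ν) (x : S) :
    0 ≤ μ x := by
  rw [← h.2.1 x]
  exact Finset.sum_nonneg fun _ _ => h.1.1 _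

/-- Gluing of couplings. -/
theorem coupling_glue {ω ω' : S × S → ℝ} {μ ν κ : S → ℝ} (h : IsCoupling ω μ ν)
    (h' : IsCoupling ω' ν κ) :
    IsCoupling (fun p : S × S => ∑ y, ω (p.1, y) * ω' (y, p.2) / ν y) μ κ := by
  have hν := coupling_left_nonneg h'
  have h1 : ∀ x, ∑ z, ∑ y, ω (x, y) * ω' (y, z) / ν y = μ x := by
    intro x
    rw [Finset.sum_comm, ← h.2.1 x]
    refine Finset.sum_congr rfl fun y _ => ?_
    rw [← Finset.sum_div, ← Finset.mul_sum, h'.2.1 y]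
    by_cases hy : ν y = 0
    · simp [hy, coupling_zero_right h hy x]
    · field_simp
  have h2 : ∀ z, ∑ x, ∑ y, ω (x, y) * ω' (y, z) / ν y = κ z := by
    intro z
    rw [Finset.sum_comm, ← h'.2.2 z]
    refine Finset.sum_congr rfl fun y _ => ?_
    rw [← Finset.sum_div, ← Finset.sum_mul, h.2.2 y]
    by_cases hy : ν y = 0
    · simp [hy, coupling_zero_left h' hy z]
    · field_simp
  refine ⟨⟨fun x => Finset.sum_nonneg fun y _ =>
    div_nonneg (mul_nonneg (h.1.1 _) (h'.1.1 _)) (hν y), ?_⟩, h1, h2⟩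
  rw [Fintype.sum_prod_type]
  simp only [h1]
  rw [← h.1.2, Fintype.sum_prod_type]
  exact Finset.sum_congr rfl fun x _ => (h.2.1 x).symm

theorem GoodN.glue {A B C : Set (S × S)}
    (hB : ∀ p ∈ B, ℓ p.1 = ℓ p.2 ∧ ∃ ω, IsCoupling ω (τ p.1) (τ p.2) ∧ psupp ω ⊆ B)
    (hC : ∀ s t u, (s, t) ∈ A → (t, u) ∈ B → (s, u) ∈ C)
    (hBC : ∀ p ∈ B, ∃ n, GoodN ℓ τ C n p)
    {n : ℕ} {p : S × S} (h : GoodN ℓ τ A n p) :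
    ∀ u, (p.2, u) ∈ B → ∃ m, GoodN ℓ τ C m (p.1, u) := by
  induction h with
  | base s h => exact fun u hu => hBC _ hu
  | step n p hp hl ω hω hs q hq hg ih =>
    intro u hu
    obtain ⟨hl', ω', hω', hs'⟩ := hB _ hu
    dsimp only at hω' hl'
    have hpos : 0 < τ p.2 q.2 := by
      rcases (coupling_left_nonneg hω' q.2).lt_or_eq with h | h
      · exact h
      · have := coupling_zero_right hω h.symm q.1
        exact absurd hq (by rw [show q = (q.1, q.2) from rfl, this]; exact lt_irrefl _)
    have hex : ∃ u', 0 < ω' (q.2, u') := by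
      by_contra hcon
      push Not at hcon
      have := hω'.2.1 q.2
      have h2 : ∑ y, ω' (q.2, y) ≤ 0 := Finset.sum_nonpos fun y _ => hcon y
      linarith
    obtain ⟨u', hu'⟩ := hex
    obtain ⟨m, hm⟩ := ih u' (hs' hu')
    refine ⟨m + 1, .step m _ (hC _ _ _ hp hu) (hl.trans hl') _ (coupling_glue hω hω') ?_
      (q.1, u') ?_ hm⟩
    · rintro ⟨x, z⟩ hx
      have hx' : 0 < ∑ y, ω (x, y) * ω' (y, z) / τ p.2 y := hx
      have : ∃ y ∈ Finset.univ, 0 < ω (x, y) * ω' (y, z) / τ p.2 y := by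
        by_contra hcon
        push Not at hcon
        exact absurd hx' (not_lt.mpr (Finset.sum_nonpos hcon))
      obtain ⟨y, _, hy⟩ := this
      refine hC x y z (hs ?_) (hs' ?_)
      · refine lt_of_le_of_ne (hω.1.1 _) fun h => ?_
        rw [← h] at hy
        simp at hy
      · refine lt_of_le_of_ne (hω'.1.1 _) fun h => ?_
        rw [← h] at hy
        simp at hy
    · refine lt_of_lt_of_le (b := ω (q.1, q.2) * ω' (q.2, u') / τ p.2 q.2)
        (div_pos (mul_pos hq hu') hpos) ?_
      exact Finset.single_le_sum (f := fun y => ω (q.1, y) * ω' (y, u') / τ p.2 y)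
        (fun y _ => div_nonneg (mul_nonneg (hω.1.1 _) (hω'.1.1 _))
          (coupling_left_nonneg hω' y)) (Finset.mem_univ q.2)

theorem good_of_filter {U : Set (S × S)} {p : S × S} (h : p ∈ FilterFn ℓ τ U) :
    ∃ n, GoodN ℓ τ U n p := by
  obtain ⟨_, P, hP, q, hqd, hpath, hqU, _⟩ := h
  induction hpath using Relation.ReflTransGen.head_induction_on with
  | refl =>
    obtain ⟨a, b⟩ := q
    dsimp only at hqd
    subst hqd
    exact ⟨0, .base a hqU⟩
  | @head a b hab _ ih =>
    obtain ⟨ha, hs, hpos⟩ := hab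
    obtain ⟨n, hn⟩ := ih (hs hpos)
    by_cases hl : ℓ a.1 = ℓ a.2
    · exact ⟨n + 1, .step n a ha hl _ (hP.2.1 a hl) hs b hpos hn⟩
    · have hb : b ∈ psupp (P a) := hpos
      rw [hP.2.2 a hl] at hb
      rw [← (show b = a from hb)]
      exact ⟨n, hn⟩

/-- A single policy witnessing all good pairs. -/
theorem exists_policy (hτ : IsTransFn τ) (U : Set (S × S)) (hU : ∀ s, (s, s) ∈ U) :
    ∃ P, IsPolicy ℓ τ P ∧ ∀ n p, GoodN ℓ τ U n p →
      psupp (P p) ⊆ U ∧ SupportsPathToDelta P U p := by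
  have key : ∀ p : S × S, ∃ d : S × S → ℝ, IsDist d ∧
      (ℓ p.1 = ℓ p.2 → IsCoupling d (τ p.1) (τ p.2)) ∧
      (ℓ p.1 ≠ ℓ p.2 → psupp d = {p}) ∧
      (p.1 = p.2 → psupp d ⊆ U) ∧
      (p.1 ≠ p.2 → ∀ n, GoodN ℓ τ U n p → psupp d ⊆ U ∧
        ∃ m < n, ∃ q, 0 < d q ∧ GoodN ℓ τ U m q) := by
    intro p
    by_cases hd : p.1 = p.2
    · have hc := coupling_diag (hτ p.1)
      refine ⟨_, hc.1, fun _ => ?_, fun h => absurd (congrArg ℓ hd) h, fun _ => ?_,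
        fun h => absurd hd h⟩
      · rw [← hd]
        exact hc
      · rintro ⟨x, y⟩ hx
        simp only [psupp, Set.mem_ofPred_eq] at hx
        split_ifs at hx with hxy
        · subst hxy
          exact hU x
        · exact absurd hx (lt_irrefl _)
    by_cases hg : ∃ n, GoodN ℓ τ U n p
    · have hmin := fun m => Nat.find_min' (m := m) hg
      have hsp := Nat.find_spec hg
      generalize Nat.find hg = k at hmin hsp
      cases hsp with
      | base s h => exact absurd rfl hd
      | step n p hp hl ω hω hs q hq hg' =>
        refine ⟨ω, hω.1, fun _ => hω, fun h => absurd hl h, fun h => absurd h hd,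
          fun _ m hm => ⟨hs, n, ?_, q, hq, hg'⟩⟩
        exact hmin m hm
    · by_cases hl : ℓ p.1 = ℓ p.2
      · have hc := coupling_prod (hτ p.1) (hτ p.2)
        exact ⟨_, hc.1, fun _ => hc, fun h => absurd hl h, fun h => absurd h hd,
          fun _ n hn => absurd ⟨n, hn⟩ hg⟩
      · refine ⟨fun q => if q = p then 1 else 0, ⟨fun q => ?_, by simp⟩,
          fun h => absurd h hl, fun _ => ?_, fun h => absurd h hd,
          fun _ n hn => absurd ⟨n, hn⟩ hg⟩
        · dsimp only
          split_ifs <;> norm_num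
        · ext q
          simp only [psupp, Set.mem_ofPred_eq, Set.mem_singleton_iff]
          split_ifs with h <;> simp [h]
  choose P h1 h2 h3 h4 h5 using key
  refine ⟨P, ⟨h1, h2, h3⟩, ?_⟩
  intro n
  induction n using Nat.strong_induction_on with
  | _ n ih =>
    intro p hp
    by_cases hd : p.1 = p.2
    · exact ⟨h4 p hd, p, hd, .refl, hp.mem, h4 p hd⟩
    · obtain ⟨hs, m, hm, q, hq, hgq⟩ := h5 p hd n hp
      obtain ⟨_, r, hr, hpath, hrest⟩ := ih m hm q hgq
      exact ⟨hs, r, hr, .head ⟨hp.mem, hs, hq⟩ hpath, hrest⟩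

theorem filter_of_good (hτ : IsTransFn τ) {U : Set (S × S)} (hU : ∀ s, (s, s) ∈ U)
    {n : ℕ} {p : S × S} (h : GoodN ℓ τ U n p) : p ∈ FilterFn ℓ τ U := by
  obtain ⟨P, hP, hg⟩ := exists_policy ℓ τ hτ U hU
  exact ⟨h.mem, P, hP, (hg n p h).2⟩

/-- Existence of least fixed points and the induction principle. -/
theorem exists_lfp {A : Type*} (F : (A → ℝ) → (A → ℝ))
    (h01 : ∀ d, Is01 d → Is01 (F d))
    (hmono : ∀ d e, Is01 d → Is01 e → (∀ a, d a ≤ e a) → ∀ a, F d a ≤ F e a) :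
    ∃ d, IsLfpOn F d ∧ ∀ e, Is01 e → (∀ a, F e a ≤ e a) → ∀ a, d a ≤ e a := by
  let d : A → ℝ := fun a => sInf {r | ∃ e, Is01 e ∧ (∀ a, F e a ≤ e a) ∧ r = e a}
  have hbdd : ∀ a, BddBelow {r | ∃ e, Is01 e ∧ (∀ a, F e a ≤ e a) ∧ r = e a} := by
    intro a
    refine ⟨0, ?_⟩
    rintro r ⟨e, he, _, rfl⟩
    exact (he a).1
  have hone : Is01 (fun _ : A => (1 : ℝ)) := fun a => by norm_num
  have hmem1 : ∀ a, (1 : ℝ) ∈ {r | ∃ e, Is01 e ∧ (∀ a, F e a ≤ e a) ∧ r = e a} :=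
    fun a => ⟨_, hone, fun a => (h01 _ hone a).2, rfl⟩
  have hle : ∀ e, Is01 e → (∀ a, F e a ≤ e a) → ∀ a, d a ≤ e a :=
    fun e he hF a => csInf_le (hbdd a) ⟨e, he, hF, rfl⟩
  have hd01 : Is01 d := by
    intro a
    refine ⟨le_csInf ⟨1, hmem1 a⟩ ?_, csInf_le (hbdd a) (hmem1 a)⟩
    rintro r ⟨e, he, _, rfl⟩
    exact (he a).1
  have hpre : ∀ a, F d a ≤ d a := by
    intro a
    refine le_csInf ⟨1, hmem1 a⟩ ?_
    rintro r ⟨e, he, hF, rfl⟩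
    exact (hmono d e hd01 he (hle e he hF) a).trans (hF a)
  have hpost : ∀ a, d a ≤ F d a :=
    hle _ (h01 _ hd01) (hmono _ _ (h01 _ hd01) hd01 hpre)
  exact ⟨d, ⟨hd01, funext fun a => le_antisymm (hpre a) (hpost a),
    fun e he hF => hle e he fun a => (congrFun hF a).le⟩, hle⟩

theorem reach_lfp {P : S × S → S × S → ℝ} (hP : ∀ p, IsDist (P p)) :
    ∃ d, IsLfpOn (ReachF P) d ∧
      ∀ e, Is01 e → (∀ a, ReachF P e a ≤ e a) → ∀ a, d a ≤ e a := by
  apply exists_lfp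
  · intro d hd p
    unfold ReachF
    split_ifs
    · norm_num
    · refine ⟨Finset.sum_nonneg fun q _ => mul_nonneg ((hP p).1 q) (hd q).1, ?_⟩
      rw [← (hP p).2]
      exact Finset.sum_le_sum fun q _ => mul_le_of_le_one_right ((hP p).1 q) (hd q).2
  · intro d e _ _ hde p
    unfold ReachF
    split_ifs
    · exact le_rfl
    · exact Finset.sum_le_sum fun q _ => mul_le_mul_of_nonneg_left (hde q) ((hP p).1 q)

/-- Averages: if `f ≥ m` on the support and the average is at most `m`, then `f = m` there. -/
theorem avg_eq {X : Type*} [Fintype X] {μ f : X → ℝ} {m : ℝ} (hμ : IsDist μ)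
    (hf : ∀ q, 0 < μ q → m ≤ f q) (h : ∑ q, μ q * f q ≤ m) :
    ∀ q, 0 < μ q → f q = m := by
  have h0 : ∀ q ∈ Finset.univ, 0 ≤ μ q * (f q - m) := by
    intro q _
    rcases (hμ.1 q).lt_or_eq with hq | hq
    · exact mul_nonneg hq.le (sub_nonneg.mpr (hf q hq))
    · simp [← hq]
  have h1 : ∑ q, μ q * (f q - m) ≤ 0 := by
    simp only [mul_sub, Finset.sum_sub_distrib, ← Finset.sum_mul, hμ.2]
    linarith
  have h2 := (Finset.sum_eq_zero_iff_of_nonneg h0).mp (le_antisymm h1 (Finset.sum_nonneg h0))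
  intro q hq
  rcases mul_eq_zero.mp (h2 q (Finset.mem_univ q)) with h | h
  · exact absurd h hq.ne'
  · linarith

theorem isRob_sub (hτ : IsTransFn τ) {U : Set (S × S)} (hU : IsRob ℓ τ U) :
    U ⊆ RobSetOf ℓ τ := by
  obtain ⟨P, hP, hg⟩ := exists_policy ℓ τ hτ U hU.1
  obtain ⟨ρ, hρ, _⟩ := reach_lfp hP.1
  intro p hp
  refine ⟨P, ρ, hP, hρ, ?_⟩
  obtain ⟨p0, hp0, hmin⟩ := Set.exists_min_image U ρ (Set.toFinite U) ⟨p, hp⟩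
  have hdiag : ∀ a : S × S, a.1 = a.2 → ρ a = 1 := by
    intro a ha
    rw [← hρ.2.1]
    simp [ReachF, ha]
  obtain ⟨n, hn⟩ := hU.2 p0 hp0
  obtain ⟨_, q, hq, hpath, hqU, _⟩ := hg n p0 hn
  have hall : ∀ a, Relation.ReflTransGen (SupStep P U) a q → ρ a = ρ p0 → ρ p0 = 1 := by
    intro a ha
    induction ha using Relation.ReflTransGen.head_induction_on with
    | refl => exact fun h => h ▸ hdiag q hq
    | @head a b hab _ ih =>
      intro h
      by_cases hd : a.1 = a.2
      · rw [← h, hdiag a hd]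
      · refine ih (avg_eq (hP.1 a) (fun c hc => hmin c (hab.2.1 hc)) ?_ b hab.2.2)
        have := congrFun hρ.2.1 a
        simp only [ReachF, hd, if_false] at this
        rw [this, h]
  have h1 := hall p0 hpath rfl
  exact le_antisymm (hρ.1 p).2 (h1 ▸ hmin p hp)

theorem robust_exists {p : S × S} (h : p ∈ RobSetOf ℓ τ) : ∃ U, IsRob ℓ τ U ∧ p ∈ U := by
  obtain ⟨P, ρ, hP, hρ, hp⟩ := h
  obtain ⟨ρ', hρ', hind'⟩ := reach_lfp hP.1
  have hind : ∀ e, Is01 e → (∀ a, ReachF P e a ≤ e a) → ∀ a, ρ a ≤ e a :=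
    fun e he hF a => (hρ.2.2 ρ' hρ'.1 hρ'.2.1 a).trans (hind' e he hF a)
  have hdiag : ∀ a : S × S, a.1 = a.2 → ρ a = 1 := by
    intro a ha
    rw [← hρ.2.1]
    simp [ReachF, ha]
  let U : Set (S × S) := {q | ρ q = 1}
  have hUd : ∀ s, (s, s) ∈ U := fun s => hdiag (s, s) rfl
  have hfix : ∀ a : S × S, a.1 ≠ a.2 → ∑ q, P a q * ρ q = ρ a := by
    intro a ha
    have := congrFun hρ.2.1 a
    simpa only [ReachF, ha, if_false] using this
  have hsucc : ∀ a ∈ U, a.1 ≠ a.2 → psupp (P a) ⊆ U := by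
    intro a ha hd q hq
    have := avg_eq (μ := P a) (f := fun q => - ρ q) (m := -1) (hP.1 a)
      (fun q _ => by have := (hρ.1 q).2; linarith)
      (by
        have h1 := hfix a hd
        have h2 : ρ a = 1 := ha
        simp only [mul_neg, Finset.sum_neg_distrib]
        linarith) q hq
    show ρ q = 1
    linarith
  refine ⟨U, ⟨hUd, ?_⟩, hp⟩
  by_contra hcon
  push Not at hcon
  obtain ⟨b, hbU, hb⟩ := hcon
  let N : Set (S × S) := {q | q ∈ U ∧ ∀ n, ¬ GoodN ℓ τ U n q}
  let e : S × S → ℝ := fun q => if q ∈ N then 0 else ρ q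
  have he : Is01 e := by
    intro q
    dsimp only [e]
    split_ifs
    · norm_num
    · exact hρ.1 q
  have heρ : ∀ q, e q ≤ ρ q := by
    intro q
    dsimp only [e]
    split_ifs
    · exact (hρ.1 q).1
    · exact le_rfl
  have hpre : ∀ a, ReachF P e a ≤ e a := by
    intro a
    by_cases haN : a ∈ N
    · have hd : a.1 ≠ a.2 := by
        intro hd
        obtain ⟨x, y⟩ := a
        dsimp only at hd
        subst hd
        exact haN.2 0 (.base x (hUd x))
      have hea : e a = 0 := if_pos haN
      rw [hea]
      simp only [ReachF, hd, if_false]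
      refine Finset.sum_nonpos fun q _ => ?_
      rcases ((hP.1 a).1 q).lt_or_eq with hq | hq
      · have hqN : q ∈ N := by
          by_cases hl : ℓ a.1 = ℓ a.2
          · refine ⟨hsucc a haN.1 hd hq, fun n hn => haN.2 (n + 1) ?_⟩
            exact .step n a haN.1 hl _ (hP.2.1 a hl) (hsucc a haN.1 hd) q hq hn
          · have hq' : q ∈ psupp (P a) := hq
            rw [hP.2.2 a hl] at hq'
            rw [show q = a from hq']
            exact haN
        have heq : e q = 0 := if_pos hqN
        simp [heq]
      · simp [← hq]
    · have hea : e a = ρ a := if_neg haN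
      rw [hea]
      by_cases hd : a.1 = a.2
      · simp [ReachF, hd, hdiag a hd]
      · simp only [ReachF, hd, if_false]
        rw [← hfix a hd]
        exact Finset.sum_le_sum fun q _ => mul_le_mul_of_nonneg_left (heρ q) ((hP.1 a).1 q)
  have h1 := hind e he hpre b
  have h2 : e b = 0 := if_pos ⟨hbU, hb⟩
  have h3 : ρ b = 1 := hbU
  linarith

theorem isRob_robust (hτ : IsTransFn τ) : IsRob ℓ τ (RobSetOf ℓ τ) := by
  have hd : IsRob ℓ τ {p : S × S | p.1 = p.2} := by
    refine ⟨fun s => rfl, ?_⟩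
    rintro ⟨s, t⟩ h
    have h' : s = t := h
    subst h'
    exact ⟨0, .base s rfl⟩
  refine ⟨fun s => isRob_sub ℓ τ hτ hd rfl, fun p hp => ?_⟩
  obtain ⟨U, hU, hpU⟩ := robust_exists ℓ τ hp
  obtain ⟨n, hn⟩ := hU.2 p hpU
  exact ⟨n, hn.mono ℓ τ (isRob_sub ℓ τ hτ hU)⟩

theorem robust_closed (hτ : IsTransFn τ) : ∀ p ∈ RobSetOf ℓ τ,
    ℓ p.1 = ℓ p.2 ∧ ∃ ω, IsCoupling ω (τ p.1) (τ p.2) ∧ psupp ω ⊆ RobSetOf ℓ τ := by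
  intro p hp
  obtain ⟨P, hP, hg⟩ := exists_policy ℓ τ hτ _ (isRob_robust ℓ τ hτ).1
  obtain ⟨n, hn⟩ := (isRob_robust ℓ τ hτ).2 p hp
  exact ⟨hn.label, P p, hP.2.1 p hn.label, (hg n p hn).1⟩

theorem robust_symm (hτ : IsTransFn τ) {s t : S} (h : (s, t) ∈ RobSetOf ℓ τ) :
    (t, s) ∈ RobSetOf ℓ τ := by
  have hr := isRob_robust ℓ τ hτ
  refine isRob_sub ℓ τ hτ (U := {p : S × S | p.swap ∈ RobSetOf ℓ τ}) ⟨hr.1, fun p hp => ?_⟩ h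
  obtain ⟨n, hn⟩ := hr.2 _ hp
  exact ⟨n, hn.swap ℓ τ (V := {p : S × S | p.swap ∈ RobSetOf ℓ τ}) (fun s t h => h)⟩

theorem robust_trans (hτ : IsTransFn τ) {s t u : S} (h : (s, t) ∈ RobSetOf ℓ τ)
    (h' : (t, u) ∈ RobSetOf ℓ τ) : (s, u) ∈ RobSetOf ℓ τ := by
  have hr := isRob_robust ℓ τ hτ
  let C : Set (S × S) := {p | ∃ t, (p.1, t) ∈ RobSetOf ℓ τ ∧ (t, p.2) ∈ RobSetOf ℓ τ}
  have hsub : RobSetOf ℓ τ ⊆ C := fun p hp => ⟨p.1, hr.1 _, hp⟩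
  refine isRob_sub ℓ τ hτ (U := C) ⟨fun s => ⟨s, hr.1 s, hr.1 s⟩, ?_⟩ ⟨t, h, h'⟩
  rintro p ⟨y, h1, h2⟩
  obtain ⟨n, hn⟩ := hr.2 _ h1
  refine hn.glue ℓ τ (robust_closed ℓ τ hτ) (C := C) (fun a b c ha hb => ⟨b, ha, hb⟩) ?_ p.2 h2
  intro q hq
  obtain ⟨m, hm⟩ := hr.2 q hq
  exact ⟨m, hm.mono ℓ τ hsub⟩

theorem robust_isBisim (hτ : IsTransFn τ) : IsBisim ℓ τ (RobSetOf ℓ τ) :=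
  ⟨⟨(isRob_robust ℓ τ hτ).1, fun h => robust_symm ℓ τ hτ h,
    fun h h' => robust_trans ℓ τ hτ h h'⟩, robust_closed ℓ τ hτ⟩

theorem robust_sub_prune (hτ : IsTransFn τ) (V : Set (S × S))
    (hV : Equivalence (fun s t => (s, t) ∈ V))
    (hsub : RobSetOf ℓ τ ⊆ V) : RobSetOf ℓ τ ⊆ PruneFn (FilterFn ℓ τ V) := by
  have hr := isRob_robust ℓ τ hτ
  have hgood : ∀ p ∈ RobSetOf ℓ τ, ∃ n, GoodN ℓ τ V n p := by
    intro p hp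
    obtain ⟨n, hn⟩ := hr.2 p hp
    exact ⟨n, hn.mono ℓ τ hsub⟩
  have hsw : ∀ a b, (a, b) ∈ FilterFn ℓ τ V → (b, a) ∈ FilterFn ℓ τ V := by
    intro a b h
    obtain ⟨n, hn⟩ := good_of_filter ℓ τ h
    exact filter_of_good ℓ τ hτ hV.refl (hn.swap ℓ τ fun s t h => hV.symm h)
  have htr : ∀ a b c, (a, b) ∈ FilterFn ℓ τ V → (b, c) ∈ RobSetOf ℓ τ →
      (a, c) ∈ FilterFn ℓ τ V := by
    intro a b c h h'
    obtain ⟨n, hn⟩ := good_of_filter ℓ τ h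
    obtain ⟨m, hm⟩ := hn.glue ℓ τ (C := V) (robust_closed ℓ τ hτ)
      (fun x y z hx hy => hV.trans hx (hsub hy)) hgood c h'
    exact filter_of_good ℓ τ hτ hV.refl hm
  rintro ⟨s, t⟩ hp
  obtain ⟨n, hn⟩ := hgood _ hp
  refine ⟨filter_of_good ℓ τ hτ hV.refl hn, fun u => ⟨fun h => ?_, fun h => ?_⟩⟩
  · exact hsw _ _ (htr _ _ _ (hsw _ _ h) (robust_symm ℓ τ hτ hp))
  · exact htr _ _ _ h hp

theorem glue_supp {ω ω' : S × S → ℝ} {μ ν κ : S → ℝ} (h : IsCoupling ω μ ν)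
    (h' : IsCoupling ω' ν κ) {x z : S} (hx : 0 < ∑ y, ω (x, y) * ω' (y, z) / ν y) :
    ∃ y, 0 < ω (x, y) ∧ 0 < ω' (y, z) := by
  have : ∃ y ∈ Finset.univ, 0 < ω (x, y) * ω' (y, z) / ν y := by
    by_contra hcon
    push Not at hcon
    exact absurd hx (not_lt.mpr (Finset.sum_nonpos hcon))
  obtain ⟨y, _, hy⟩ := this
  refine ⟨y, ?_, ?_⟩
  · refine lt_of_le_of_ne (h.1.1 _) fun h => ?_
    rw [← h] at hy
    simp at hy
  · refine lt_of_le_of_ne (h'.1.1 _) fun h => ?_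
    rw [← h] at hy
    simp at hy

theorem bisimilar_equiv (hτ : IsTransFn τ) :
    Equivalence (fun s t => (s, t) ∈ {p : S × S | Bisimilar ℓ τ p.1 p.2}) := by
  refine ⟨fun s => ⟨_, robust_isBisim ℓ τ hτ, (robust_isBisim ℓ τ hτ).1.refl s⟩, ?_, ?_⟩
  · rintro s t ⟨B, hB, h⟩
    exact ⟨B, hB, hB.1.symm h⟩
  · rintro s t u ⟨B, hB, h⟩ ⟨B', hB', h'⟩
    let r : S → S → Prop := fun a b => (a, b) ∈ B ∨ (a, b) ∈ B'
    let C : Set (S × S) := {p | Relation.EqvGen r p.1 p.2}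
    have hBC : B ⊆ C := fun p hp => .rel _ _ (Or.inl hp)
    have hBC' : B' ⊆ C := fun p hp => .rel _ _ (Or.inr hp)
    refine ⟨C, ⟨⟨fun x => .refl x, fun h => .symm _ _ h, fun h h' => .trans _ _ _ h h'⟩, ?_⟩,
      Relation.EqvGen.trans s t u (hBC h) (hBC' h')⟩
    have key : ∀ a b, Relation.EqvGen r a b →
        ℓ a = ℓ b ∧ ∃ ω, IsCoupling ω (τ a) (τ b) ∧ psupp ω ⊆ C := by
      intro a b hab
      induction hab with
      | rel a b hab =>
        rcases hab with hab | hab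
        · obtain ⟨hl, ω, hω, hs⟩ := hB.2 _ hab
          exact ⟨hl, ω, hω, hs.trans hBC⟩
        · obtain ⟨hl, ω, hω, hs⟩ := hB'.2 _ hab
          exact ⟨hl, ω, hω, hs.trans hBC'⟩
      | refl a =>
        refine ⟨rfl, _, coupling_diag (hτ a), ?_⟩
        rintro ⟨x, y⟩ hx
        simp only [psupp, Set.mem_ofPred_eq] at hx
        split_ifs at hx with hxy
        · subst hxy
          exact .refl x
        · exact absurd hx (lt_irrefl _)
      | symm a b _ ih =>
        obtain ⟨hl, ω, hω, hs⟩ := ih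
        exact ⟨hl.symm, _, coupling_swap hω, fun x hx => .symm _ _ (hs hx)⟩
      | trans a b c _ _ ih1 ih2 =>
        obtain ⟨hl, ω, hω, hs⟩ := ih1
        obtain ⟨hl', ω', hω', hs'⟩ := ih2
        refine ⟨hl.trans hl', _, coupling_glue hω hω', ?_⟩
        rintro ⟨x, z⟩ hx
        obtain ⟨y, h1, h2⟩ := glue_supp hω hω' hx
        exact Relation.EqvGen.trans x y z (hs (a := (x, y)) h1) (hs' (a := (y, z)) h2)
    exact fun p hp => key _ _ hp

end RobHelpers

/-- Theorem 19: the iteration `R₀ = ∼`, `R_{n+1} = Refine(R_n)` is decreasing, stabilizes,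
and its eventual fixed point is robust probabilistic bisimilarity `≃`; moreover `≃` is the
greatest fixed point of `Refine`. -/
theorem algorithm_computes_robust_bisimilarity {S L : Type*} [Fintype S] [Nonempty S]
    [Fintype L]
    (ℓ : S → L) (hℓ : ∃ a b : S, ℓ a ≠ ℓ b)
    (τ : S → S → ℝ) (hτ : IsTransFn τ)
    (R : ℕ → Set (S × S))
    (hR0 : R 0 = {p : S × S | Bisimilar ℓ τ p.1 p.2})
    (hstep : ∀ n, IsGreatestBisimIn ℓ τ (PruneFn (FilterFn ℓ τ (R n))) (R (n + 1))) :
    (∀ n, R (n + 1) ⊆ R n) ∧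
    (∃ n, R (n + 1) = R n ∧ R n = {p : S × S | Robust ℓ τ p.1 p.2}) ∧
    (∀ R' : Set (S × S), IsBisim ℓ τ R' →
      IsGreatestBisimIn ℓ τ (PruneFn (FilterFn ℓ τ R')) R' →
      R' ⊆ {p : S × S | Robust ℓ τ p.1 p.2}) ∧
    IsGreatestBisimIn ℓ τ
      (PruneFn (FilterFn ℓ τ {p : S × S | Robust ℓ τ p.1 p.2}))
      {p : S × S | Robust ℓ τ p.1 p.2} := by
  have hdec : ∀ n, R (n + 1) ⊆ R n := fun n p hp => ((hstep n).2.1 hp).1.1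
  have hbis := robust_isBisim ℓ τ hτ
  have hinv : ∀ n, Equivalence (fun s t => (s, t) ∈ R n) ∧ RobSetOf ℓ τ ⊆ R n := by
    intro n
    induction n with
    | zero =>
      rw [hR0]
      constructor
      · exact bisimilar_equiv ℓ τ hτ
      · intro p hp
        exact ⟨_, hbis, hp⟩
    | succ n ih =>
      refine ⟨(hstep n).1.1, ?_⟩
      exact (hstep n).2.2 _ hbis (robust_sub_prune ℓ τ hτ _ ih.1 ih.2)
  have hfix : ∀ R' : Set (S × S), IsBisim ℓ τ R' → R' ⊆ PruneFn (FilterFn ℓ τ R') →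
      R' ⊆ RobSetOf ℓ τ := by
    intro R' hB hsub
    apply isRob_sub ℓ τ hτ
    refine ⟨fun s => hB.1.refl s, fun p hp => ?_⟩
    exact good_of_filter ℓ τ (hsub hp).1
  have hst : ∃ n, R (n + 1) = R n := by
    have hanti : Antitone R := antitone_nat_of_succ_le hdec
    obtain ⟨n, hn⟩ := WellFoundedGT.monotone_chain_condition
      (α := (Set (S × S))ᵒᵈ) ⟨fun n => OrderDual.toDual (R n), fun a b h => hanti h⟩
    exact ⟨n, (hn (n + 1) (Nat.le_succ n)).symm⟩
  refine ⟨hdec, ?_, ?_, ?_⟩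
  · obtain ⟨n, hn⟩ := hst
    refine ⟨n, hn, Set.Subset.antisymm ?_ (hinv n).2⟩
    have h := hstep n
    rw [hn] at h
    exact hfix _ h.1 h.2.1
  · intro R' hB hG
    exact hfix R' hB hG.2.1
  · exact ⟨hbis, robust_sub_prune ℓ τ hτ _ hbis.1 subset_rfl,
      fun B' _ h p hp => (h hp).1.1⟩
end
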